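/- Let A : E → ℝ be continuous with A x > 0 for all x, and let g : E → ℝ be any function. If f₁ and f₂ are twice continuously differentiable ℤⁿ-periodic functions satisfying Δ f₁ x - A x * f₁ x = g x and Δ f₂ x - A x * f₂ x = g x for all x ∈ E, then f₁ = f₂. -/

import Mathlib

/-- The Laplacian of `f` at `x`: the sum of the pure second directional derivatives of `f`
at `x` along the standard orthonormal basis directions of `EuclideanSpace ℝ (Fin n)`. -/
noncomputable def laplacian {n : ℕ} (f : EuclideanSpace ℝ (Fin n) → ℝ)
    (x : EuclideanSpace ℝ (Fin n)) : ℝ :=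
  ∑ i : Fin n, (iteratedFDeriv ℝ 2 f x)
    ![EuclideanSpace.single i (1 : ℝ), EuclideanSpace.single i (1 : ℝ)]

/-!
A continuous function invariant under a lattice of full rank takes all its values on a compact
parallelepiped, so it attains its maximum. At a maximum point `x` of the difference `u = f₁ - f₂`
the Laplacian is nonpositive, while `Δ u = A u`; since `A x > 0`, this forces `u x ≤ 0`, hence
`u ≤ 0` everywhere. Exchanging `f₁` and `f₂` gives equality.
-/

open Filter Function Module
open scoped Laplacian Topology

section Periodic

theorem periodic_of_mem_span_int {E β : Type*} [AddCommGroup E] {f : E → β} {s : Set E}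
    (hf : ∀ c ∈ s, Periodic f c) {c : E} (hc : c ∈ Submodule.span ℤ s) : Periodic f c := by
  induction hc using Submodule.span_induction with
  | mem c hc => exact hf c hc
  | zero => exact periodic_with_period_zero f
  | add c₁ c₂ _ _ h₁ h₂ => exact h₁.add_period h₂
  | smul k c _ h => exact h.zsmul k

theorem exists_forall_ge_of_periodic_basis {E ι α : Type*} [NormedAddCommGroup E]
    [NormedSpace ℝ E] [Finite ι] [LinearOrder α] [TopologicalSpace α] [ClosedIciTopology α]
    (b : Basis ι ℝ E) {f : E → α} (hf : Continuous f) (hper : ∀ i, Periodic f (b i)) :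
    ∃ x, ∀ y, f y ≤ f x := by
  cases nonempty_fintype ι
  obtain ⟨x, -, hx⟩ := b.parallelepiped.isCompact.exists_isMaxOn
    b.parallelepiped.nonempty hf.continuousOn
  refine ⟨x, fun y => ?_⟩
  have hfloor : Periodic f (ZSpan.floor b y : E) :=
    periodic_of_mem_span_int (Set.forall_mem_range.2 hper) (ZSpan.floor b y).2
  have hfract : ZSpan.fract b y ∈ parallelepiped b :=
    ZSpan.fundamentalDomain_subset_parallelepiped b (ZSpan.fract_mem_fundamentalDomain b y)
  calc
    f y = f (ZSpan.fract b y) := (hfloor.sub_eq y).symm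
    _ ≤ f x := hx hfract

end Periodic

section LocalMax

theorem deriv_deriv_nonpos_of_isLocalMax {φ : ℝ → ℝ} {a : ℝ} (h : IsLocalMax φ a)
    (hφ : ContinuousAt φ a) : deriv (deriv φ) a ≤ 0 := by
  by_contra! hpos
  have hmin : IsLocalMin φ a := isLocalMin_of_deriv_deriv_pos hpos h.deriv_eq_zero hφ
  have hconst : φ =ᶠ[𝓝 a] fun _ => φ a := by
    filter_upwards [h, hmin] with t hle hge using le_antisymm hle hge
  have hzero : deriv (deriv φ) a = 0 := by
    rw [hconst.deriv.deriv_eq, deriv_const', deriv_const]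
  exact hpos.ne' hzero

theorem deriv_deriv_comp_add_smul {𝕜 E F : Type*} [NontriviallyNormedField 𝕜]
    [NormedAddCommGroup E] [NormedSpace 𝕜 E] [NormedAddCommGroup F] [NormedSpace 𝕜 F]
    {f : E → F} {x : E} (hf : ContDiffAt 𝕜 2 f x) (v : E) :
    deriv (deriv fun t : 𝕜 => f (x + t • v)) 0 = iteratedFDeriv 𝕜 2 f x ![v, v] := by
  have hline (t : 𝕜) : HasDerivAt (fun t : 𝕜 => x + t • v) v t := by
    simpa using ((hasDerivAt_id t).smul_const v).const_add x
  have hline_zero : x = x + (0 : 𝕜) • v := by simp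
  have htendsto : Tendsto (fun t : 𝕜 => x + t • v) (𝓝 0) (𝓝 x) := by
    simpa only [← hline_zero] using (hline 0).continuousAt.tendsto
  have hfirst : (deriv fun t : 𝕜 => f (x + t • v)) =ᶠ[𝓝 0] fun t => fderiv 𝕜 f (x + t • v) v := by
    filter_upwards [htendsto.eventually (hf.eventually (by simp))] with t ht
    exact ((ht.differentiableAt two_ne_zero).hasFDerivAt.comp_hasDerivAt t (hline t)).deriv
  have hfderiv : HasFDerivAt (fderiv 𝕜 f) (fderiv 𝕜 (fderiv 𝕜 f) x) x :=
    ((hf.fderiv_right (m := 1) one_add_one_eq_two.le).differentiableAt one_ne_zero).hasFDerivAt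
  have hsecond : HasDerivAt (fun t : 𝕜 => fderiv 𝕜 f (x + t • v) v)
      (fderiv 𝕜 (fderiv 𝕜 f) x v v) 0 := by
    have hcomp := hfderiv.comp_hasDerivAt_of_eq (0 : 𝕜) (hline 0) hline_zero
    exact (ContinuousLinearMap.apply 𝕜 F v).hasFDerivAt.comp_hasDerivAt 0 hcomp
  rw [hfirst.deriv_eq, hsecond.deriv, iteratedFDeriv_two_apply]
  rfl

theorem iteratedFDeriv_two_nonpos_of_isLocalMax {E : Type*} [NormedAddCommGroup E]
    [NormedSpace ℝ E] {f : E → ℝ} {x : E} (h : IsLocalMax f x) (hf : ContDiffAt ℝ 2 f x)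
    (v : E) : iteratedFDeriv ℝ 2 f x ![v, v] ≤ 0 := by
  have hcont : ContinuousAt (fun t : ℝ => x + t • v) 0 := by fun_prop
  have hline_zero : x + (0 : ℝ) • v = x := by simp
  have hmax : IsLocalMax (fun t : ℝ => f (x + t • v)) 0 := by
    rw [← hline_zero] at h
    exact h.comp_tendsto (g := fun t : ℝ => x + t • v) hcont
  rw [← deriv_deriv_comp_add_smul hf v]
  exact deriv_deriv_nonpos_of_isLocalMax hmax (hf.continuousAt.comp_of_eq hcont hline_zero)

end LocalMax

section Laplacian

variable {E : Type*} [NormedAddCommGroup E] [InnerProductSpace ℝ E] [FiniteDimensional ℝ E]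

theorem laplacian_nonpos_of_isLocalMax {f : E → ℝ} {x : E} (h : IsLocalMax f x)
    (hf : ContDiffAt ℝ 2 f x) : Δ f x ≤ 0 := by
  rw [InnerProductSpace.laplacian_eq_iteratedFDeriv_stdOrthonormalBasis]
  exact Finset.sum_nonpos fun _ _ => iteratedFDeriv_two_nonpos_of_isLocalMax h hf _

variable {ι : Type*} (b : Basis ι ℝ E) {A : E → ℝ}

theorem nonpos_of_periodic_of_mul_le_laplacian {u : E → ℝ} (hA : ∀ x, 0 < A x)
    (hu : ContDiff ℝ 2 u) (hper : ∀ i, Periodic u (b i)) (hle : ∀ x, A x * u x ≤ Δ u x) :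
    u ≤ 0 := by
  have : Finite ι := Module.Finite.finite_basis b
  obtain ⟨x, hx⟩ := exists_forall_ge_of_periodic_basis b hu.continuous hper
  have hlap : Δ u x ≤ 0 :=
    laplacian_nonpos_of_isLocalMax (Eventually.of_forall hx) hu.contDiffAt
  have hmax : u x ≤ 0 := nonpos_of_mul_nonpos_right ((hle x).trans hlap) (hA x)
  exact fun y => (hx y).trans hmax

theorem le_of_periodic_of_laplacian_sub_mul_le {f₁ f₂ : E → ℝ} (hA : ∀ x, 0 < A x)
    (hf₁ : ContDiff ℝ 2 f₁) (hf₂ : ContDiff ℝ 2 f₂)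
    (hper₁ : ∀ i, Periodic f₁ (b i)) (hper₂ : ∀ i, Periodic f₂ (b i))
    (hle : ∀ x, Δ f₂ x - A x * f₂ x ≤ Δ f₁ x - A x * f₁ x) : f₁ ≤ f₂ := by
  refine sub_nonpos.1 <| nonpos_of_periodic_of_mul_le_laplacian b hA (hf₁.sub hf₂)
    (fun i => (hper₁ i).sub (hper₂ i)) fun x => ?_
  rw [hf₁.contDiffAt.laplacian_sub hf₂.contDiffAt, Pi.sub_apply]
  linarith [hle x]

theorem uniqueness_of_periodic_solutions_general {f₁ f₂ g : E → ℝ} (hA : ∀ x, 0 < A x)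
    (hf₁ : ContDiff ℝ 2 f₁) (hf₂ : ContDiff ℝ 2 f₂)
    (hper₁ : ∀ i, Periodic f₁ (b i)) (hper₂ : ∀ i, Periodic f₂ (b i))
    (heq₁ : ∀ x, Δ f₁ x - A x * f₁ x = g x) (heq₂ : ∀ x, Δ f₂ x - A x * f₂ x = g x) :
    f₁ = f₂ := by
  have heq (x : E) : Δ f₁ x - A x * f₁ x = Δ f₂ x - A x * f₂ x := (heq₁ x).trans (heq₂ x).symm
  exact le_antisymm
    (le_of_periodic_of_laplacian_sub_mul_le b hA hf₁ hf₂ hper₁ hper₂ fun x => (heq x).ge)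
    (le_of_periodic_of_laplacian_sub_mul_le b hA hf₂ hf₁ hper₂ hper₁ fun x => (heq x).le)

end Laplacian

theorem laplacian_eq_innerProductSpace_laplacian {n : ℕ} (f : EuclideanSpace ℝ (Fin n) → ℝ) :
    laplacian f = Δ f := by
  simp [InnerProductSpace.laplacian_eq_iteratedFDeriv_orthonormalBasis f
    (EuclideanSpace.basisFun (Fin n) ℝ), funext_iff, laplacian]

theorem uniqueness_of_periodic_solutions {n : ℕ} (hn : 0 < n)
    (A : EuclideanSpace ℝ (Fin n) → ℝ) (hA : Continuous A)
    (hApos : ∀ x, 0 < A x)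
    (g : EuclideanSpace ℝ (Fin n) → ℝ)
    (f₁ f₂ : EuclideanSpace ℝ (Fin n) → ℝ)
    (hf₁ : ContDiff ℝ 2 f₁) (hf₂ : ContDiff ℝ 2 f₂)
    (hper₁ : ∀ (x : EuclideanSpace ℝ (Fin n)) (i : Fin n),
      f₁ (x + EuclideanSpace.single i (1 : ℝ)) = f₁ x)
    (hper₂ : ∀ (x : EuclideanSpace ℝ (Fin n)) (i : Fin n),
      f₂ (x + EuclideanSpace.single i (1 : ℝ)) = f₂ x)
    (heq₁ : ∀ x, laplacian f₁ x - A x * f₁ x = g x)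
    (heq₂ : ∀ x, laplacian f₂ x - A x * f₂ x = g x) :
    f₁ = f₂ := by
  simp only [laplacian_eq_innerProductSpace_laplacian] at heq₁ heq₂
  exact uniqueness_of_periodic_solutions_general (EuclideanSpace.basisFun (Fin n) ℝ).toBasis hApos
    hf₁ hf₂ (fun i x => by simpa using hper₁ x i) (fun i x => by simpa using hper₂ x i) heq₁ heq₂
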